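/- For every T ⊆ 𝔹, the image i_T(𝒟_T) ⊆ ℚ^{𝔹−T} equals the ℚ^{≥0}-cone generated by ⋃_𝔭 𝒢^{T-red}(T_𝔭), where 𝒢^{T-red}(T_𝔭) = {h_{σ^{n_β}β}^{β} : β ∈ 𝔹_𝔭 − T̃_𝔭} ∪ {−b_{σ^{n_β}β}^{β} : β ∈ T̃_𝔭 − T_𝔭} if 𝔹_𝔭 − T̃_𝔭 ≠ ∅, and 𝒢^{T-red}(T_𝔭) = {−e_β : β ∈ 𝔹_𝔭 − T_𝔭} if 𝔹_𝔭 = T̃_𝔭 (all these vectors are supported on 𝔹 − T and so lie in ℚ^{𝔹−T}). -/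

import Mathlib

/- Setting: `B` is the finite nonempty set 𝔹 equipped with a permutation `σ` (Frobenius),
and `p` is a prime.  Weights live in `ℚ^𝔹 = (B → ℚ)`.  The orbits `𝔹_𝔭` of `σ` are the sets
`orbit σ β`, and for `T ⊆ 𝔹` we have `T_𝔭 = T ∩ orbit σ β`. -/

open scoped Classical

noncomputable section

namespace GO

variable {B : Type*} [Fintype B] [DecidableEq B]

/-- The standard basis vector `e_β` of `ℚ^𝔹`. -/
def e (β : B) : B → ℚ := fun τ => if τ = β then 1 else 0

/-- `β'` lies in the `σ`-orbit of `β`. -/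
def sameOrbit (σ : Equiv.Perm B) (β β' : B) : Prop := ∃ n : ℕ, (σ ^ n) β = β'

/-- The `σ`-orbit `𝔹_𝔭` of `β`. -/
def orbit (σ : Equiv.Perm B) (β : B) : Set B := {τ | sameOrbit σ β τ}

/-- `|𝔹_𝔭|`, the cardinality of the orbit of `β`. -/
def orbitCard (σ : Equiv.Perm B) (β : B) : ℕ := (orbit σ β).ncard

/-- For `β`, `β'` in the same orbit: the unique `n` with `0 < n ≤ |𝔹_𝔭|` and `σ^n β' = β`,
realized as the least positive `n` with `σ^n β' = β`. -/
def steps (σ : Equiv.Perm B) (β' β : B) : ℕ := sInf {n : ℕ | 0 < n ∧ (σ ^ n) β' = β}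

/-- For `β`, `β'` in the same orbit: the unique `n` with `0 ≤ n < |𝔹_𝔭|` and `σ^n β = β'`. -/
def steps0 (σ : Equiv.Perm B) (β β' : B) : ℕ := sInf {n : ℕ | (σ ^ n) β = β'}

/-- `h_β^{β'} = -e_β + p^n e_{β'}` where `β = σ^n β'` with `0 < n ≤ |𝔹_𝔭|`. -/
def hvec (σ : Equiv.Perm B) (p : ℕ) (β β' : B) : B → ℚ :=
  -(e β) + ((p : ℚ) ^ steps σ β' β) • e β'

/-- `b_β^{β'} = e_β + p^n e_{β'}` where `β = σ^n β'` with `0 < n ≤ |𝔹_𝔭|`. -/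
def bvec (σ : Equiv.Perm B) (p : ℕ) (β β' : B) : B → ℚ :=
  (e β) + ((p : ℚ) ^ steps σ β' β) • e β'

/-- `h_β = -e_β + p e_{σ⁻¹ β}`. -/
def hsimple (σ : Equiv.Perm B) (p : ℕ) (β : B) : B → ℚ := -(e β) + (p : ℚ) • e (σ⁻¹ β)

/-- `b_β = e_β + p e_{σ⁻¹ β}`. -/
def bsimple (σ : Equiv.Perm B) (p : ℕ) (β : B) : B → ℚ := (e β) + (p : ℚ) • e (σ⁻¹ β)

/-- The `ℚ^{≥0}`-cone generated by a set `S` of vectors: all finite nonnegative rational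
linear combinations of elements of `S`. -/
def cone {V : Type*} [AddCommMonoid V] [Module ℚ V] (S : Set V) : Set V :=
  {x | ∃ (n : ℕ) (c : Fin n → ℚ) (v : Fin n → V),
    (∀ i, 0 ≤ c i) ∧ (∀ i, v i ∈ S) ∧ x = ∑ i, c i • v i}

/-- A chain in `T` (automatically contained in a single orbit, so this is the notion of a
chain in `T_𝔭` for `T_𝔭 ⊊ 𝔹_𝔭`): `C = {σ^{-i}β : 0 ≤ i ≤ m} ⊆ T` with `σβ ∉ T` and
`σ^{-m-1}β ∉ T`. -/
def IsChainIn (σ : Equiv.Perm B) (T : Set B) (C : Set B) : Prop :=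
  ∃ (β : B) (m : ℕ), σ β ∉ T ∧ (σ⁻¹ ^ (m + 1)) β ∉ T ∧
    (∀ i ≤ m, (σ⁻¹ ^ i) β ∈ T) ∧ C = {τ | ∃ i ≤ m, τ = (σ⁻¹ ^ i) β}

/-- `C̃` for a chain `C`: equals `C` if `m` is odd (i.e. `|C| = m+1` is even), and
`C ∪ {σ^{-m-1}β} = C ∪ σ⁻¹(C)` if `m` is even (i.e. `|C|` odd). -/
def chainExt (σ : Equiv.Perm B) (C : Set B) : Set B :=
  if Odd C.ncard then C ∪ (⇑σ⁻¹ '' C) else C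

/-- `T̃ = ⋃_𝔭 T̃_𝔭`: the union of `T` with the extensions `C̃` of all chains `C` in `T`.
(For orbits with `T_𝔭 = 𝔹_𝔭` there are no chains and `T̃_𝔭 = 𝔹_𝔭 = T_𝔭`.) -/
def tilde (σ : Equiv.Perm B) (T : Set B) : Set B :=
  T ∪ ⋃ (C : Set B) (_ : IsChainIn σ T C), chainExt σ C

/-- `μ_β`: the least `i > 0` with `σ^i β ∉ T` if `T_𝔭 ≠ 𝔹_𝔭`, and `0` if `T_𝔭 = 𝔹_𝔭`. -/
def mu (σ : Equiv.Perm B) (T : Set B) (β : B) : ℕ :=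
  if orbit σ β ⊆ T then 0 else sInf {i : ℕ | 0 < i ∧ (σ ^ i) β ∉ T}

/-- `n_β`: the least `i > 0` with `σ^i β ∉ T̃` (meaningful when `T̃_𝔭 ≠ 𝔹_𝔭`). -/
def nn (σ : Equiv.Perm B) (T : Set B) (β : B) : ℕ :=
  sInf {i : ℕ | 0 < i ∧ (σ ^ i) β ∉ tilde σ T}

/-- `ν_β`: the least `i ≥ 0` with `σ^{-i} β ∉ T` (meaningful when `T_𝔭 ≠ 𝔹_𝔭`). -/
def nu (σ : Equiv.Perm B) (T : Set B) (β : B) : ℕ :=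
  sInf {i : ℕ | (σ⁻¹ ^ i) β ∉ T}

/-- `𝒯(T_𝔭) = (𝔹_𝔭 − T̃_𝔭) ∪ σ(T̃_𝔭 − T_𝔭)`, taken globally (union over all `𝔭`). -/
def Tscr (σ : Equiv.Perm B) (T : Set B) : Set B :=
  (tilde σ T)ᶜ ∪ (⇑σ '' (tilde σ T \ T))

/-- The generating set `⋃_𝔭 𝒢(T_𝔭)`:
`{h_β^{β'} : β ∈ ℋ(T_𝔭), β' ∈ 𝒯(T_𝔭)} ∪ {±b_β : β ∈ T_𝔭}` over all `𝔭`. -/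
def Dgen (σ : Equiv.Perm B) (p : ℕ) (T : Set B) : Set (B → ℚ) :=
  {v | ∃ β β', β ∉ T ∧ β' ∈ Tscr σ T ∧ sameOrbit σ β β' ∧ v = hvec σ p β β'}
  ∪ {v | ∃ β ∈ T, v = bsimple σ p β ∨ v = -(bsimple σ p β)}

/-- The cone `𝒟_T`. -/
def D (σ : Equiv.Perm B) (p : ℕ) (T : Set B) : Set (B → ℚ) := cone (Dgen σ p T)

/-- `h_{σ^{n_β}β}^{β} = -e_{σ^{n_β}β} + p^{n_β} e_β`. -/
def fH (σ : Equiv.Perm B) (p : ℕ) (T : Set B) (β : B) : B → ℚ :=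
  -(e ((σ ^ nn σ T β) β)) + ((p : ℚ) ^ nn σ T β) • e β

/-- `b_{σ^{n_β}β}^{β} = e_{σ^{n_β}β} + p^{n_β} e_β`. -/
def fB (σ : Equiv.Perm B) (p : ℕ) (T : Set B) (β : B) : B → ℚ :=
  (e ((σ ^ nn σ T β) β)) + ((p : ℚ) ^ nn σ T β) • e β

/-- The generating set `⋃_𝔭 𝒢′(T_𝔭)`:
if `𝔹_𝔭 − T̃_𝔭 ≠ ∅` it is `{h_{σ^{n_β}β}^β : β ∈ 𝔹_𝔭 − T̃_𝔭} ∪ {−b_{σ^{n_β}β}^β : β ∈ T̃_𝔭 − T_𝔭}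
∪ {±b_β : β ∈ T_𝔭}`, and if `𝔹_𝔭 = T̃_𝔭` it is `{−e_β : β ∈ 𝔹_𝔭 − T_𝔭} ∪ {±b_β : β ∈ T_𝔭}`. -/
def D'gen (σ : Equiv.Perm B) (p : ℕ) (T : Set B) : Set (B → ℚ) :=
  {v | ∃ β, β ∉ tilde σ T ∧ v = fH σ p T β}
  ∪ {v | ∃ β, β ∈ tilde σ T ∧ β ∉ T ∧ ¬ orbit σ β ⊆ tilde σ T ∧ v = -(fB σ p T β)}
  ∪ {v | ∃ β, β ∉ T ∧ orbit σ β ⊆ tilde σ T ∧ v = -(e β)}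
  ∪ {v | ∃ β ∈ T, v = bsimple σ p β ∨ v = -(bsimple σ p β)}

/-- The cone `𝒟′_T`. -/
def D' (σ : Equiv.Perm B) (p : ℕ) (T : Set B) : Set (B → ℚ) := cone (D'gen σ p T)

/-- `f_β(T)` for `β ∉ T`: `h_{σ^{n_β}β}^β` if `β ∈ 𝔹_𝔭 − T̃_𝔭`; `−b_{σ^{n_β}β}^β` if
`β ∈ T̃_𝔭 − T_𝔭` and `𝔹_𝔭 ≠ T̃_𝔭`; and `−(1+p^{|𝔹_𝔭|}) e_β` if `𝔹_𝔭 = T̃_𝔭`. -/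
def fvec (σ : Equiv.Perm B) (p : ℕ) (T : Set B) (β : B) : B → ℚ :=
  if orbit σ β ⊆ tilde σ T then -((1 + (p : ℚ) ^ orbitCard σ β) • e β)
  else if β ∈ tilde σ T then -(fB σ p T β) else fH σ p T β

/-- `𝔹(T) = ⋃_𝔭 𝔹_𝔭(T)`: `β ∈ 𝔹(T)` iff `β ∉ T`, the set `𝔹_𝔭 − T̃_𝔭` is nonempty, and
`𝔹_𝔭 − T̃_𝔭 ≠ {β}` (this encodes all three cases of the definition of `𝔹_𝔭(T)`). -/
def BT (σ : Equiv.Perm B) (T : Set B) : Set B :=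
  {β | β ∉ T ∧ (orbit σ β \ tilde σ T).Nonempty ∧ orbit σ β \ tilde σ T ≠ {β}}

/-- The sign function `ε_T : 𝔹 → {−1,0,1}`. -/
def epsT (σ : Equiv.Perm B) (T : Set B) (β : B) : ℚ :=
  if orbit σ β ⊆ T then 0
  else if β ∈ tilde σ T then (-1 : ℚ) ^ (mu σ T β - 1) else 1

/-- `L^ε[β, β'](κ) = Σ_{0 ≤ i ≤ n} ε(σ^iβ) p^i k_{σ^iβ}`, where `β' = σ^n β` with
`0 ≤ n < |𝔹_𝔭|`. -/
def Lfun (σ : Equiv.Perm B) (p : ℕ) (ε : B → ℚ) (β β' : B) (κ : B → ℚ) : ℚ :=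
  ∑ i ∈ Finset.range (steps0 σ β β' + 1), ε ((σ ^ i) β) * (p : ℚ) ^ i * κ ((σ ^ i) β)

/-- `L^ε[β] = L^ε[β, σ⁻¹β]`. -/
def Lfun1 (σ : Equiv.Perm B) (p : ℕ) (ε : B → ℚ) (β : B) (κ : B → ℚ) : ℚ :=
  Lfun σ p ε β (σ⁻¹ β) κ

/-- `L_{T,β}` for `β ∈ 𝔹 − T`: `L^{ε_T}[σ^{μ_β}β]` if `β ∈ 𝔹 − T̃`, and
`L^{ε_T}[β, σ^{μ_β−1}β]` if `β ∈ T̃ − T`. -/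
def LT (σ : Equiv.Perm B) (p : ℕ) (T : Set B) (β : B) (κ : B → ℚ) : ℚ :=
  if β ∈ tilde σ T then Lfun σ p (epsT σ T) β ((σ ^ (mu σ T β - 1)) β) κ
  else Lfun1 σ p (epsT σ T) ((σ ^ mu σ T β) β) κ

/-- `ε_{T,f_β}`: negates `ε_T` on `{β, σβ, …, σ^{μ_β−1}β}`. -/
def epsTf (σ : Equiv.Perm B) (T : Set B) (β τ : B) : ℚ :=
  if ∃ i < mu σ T β, τ = (σ ^ i) β then -(epsT σ T τ) else epsT σ T τ

/-- `L_{T,f_β,τ}` for `β ∈ 𝔹(T)` and `τ ∈ 𝔹 − (T ∪ {σ^{n_β}β})`, with `β′ = σ^{n_β}β` and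
`β̃ = σ^{μ_{β′}}β′`. -/
def LTf (σ : Equiv.Perm B) (p : ℕ) (T : Set B) (β τ : B) (κ : B → ℚ) : ℚ :=
  if τ = β then
    (if β ∈ tilde σ T then
      Lfun1 σ p (epsTf σ T β) ((σ ^ mu σ T ((σ ^ nn σ T β) β)) ((σ ^ nn σ T β) β)) κ
    else
      Lfun σ p (epsTf σ T β) β (σ⁻¹ ((σ ^ mu σ T ((σ ^ nn σ T β) β)) ((σ ^ nn σ T β) β))) κ)
  else
    (if τ ∈ tilde σ T then LT σ p T τ κ
     else Lfun1 σ p (epsTf σ T β) ((σ ^ mu σ T τ) τ) κ)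

/-- `𝒟_{T,f_β} = {κ : L_{T,f_β,τ}(κ) ≥ 0 for all τ ∈ 𝔹 − (T ∪ {σ^{n_β}β})}`. -/
def Df (σ : Equiv.Perm B) (p : ℕ) (T : Set B) (β : B) : Set (B → ℚ) :=
  {κ | ∀ τ, τ ∉ T → τ ≠ (σ ^ nn σ T β) β → 0 ≤ LTf σ p T β τ κ}

/-- `i_T : ℚ^𝔹 → ℚ^{𝔹−T}`, the linear map with `i_T(e_β) = 0` if `T_𝔭 = 𝔹_𝔭` and
`i_T(e_β) = (−p)^{ν_β} e_{σ^{−ν_β}β}` otherwise. -/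
def iT (σ : Equiv.Perm B) (p : ℕ) (T : Set B) (κ : B → ℚ) : {β : B // β ∉ T} → ℚ :=
  fun β₀ => ∑ β : B, κ β *
    (if orbit σ β ⊆ T then 0
     else if (σ⁻¹ ^ nu σ T β) β = β₀.1 then (-(p : ℚ)) ^ nu σ T β else 0)

/-- Restriction to `ℚ^{𝔹−T}` of a vector of `ℚ^𝔹` (used for vectors supported on `𝔹 − T`). -/
def res (T : Set B) (v : B → ℚ) : {β : B // β ∉ T} → ℚ := fun β => v β.1

/-- The generating set `𝒢^{T-red}(T) = ⋃_𝔭 𝒢_𝔭^{T-red}(T)` of the reduced cone. -/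
def Gred (σ : Equiv.Perm B) (p : ℕ) (T : Set B) : Set ({β : B // β ∉ T} → ℚ) :=
  {v | ∃ β, β ∉ tilde σ T ∧ v = res T (fH σ p T β)}
  ∪ {v | ∃ β, β ∈ tilde σ T ∧ β ∉ T ∧ ¬ orbit σ β ⊆ tilde σ T ∧ v = res T (-(fB σ p T β))}
  ∪ {v | ∃ β, β ∉ T ∧ orbit σ β ⊆ tilde σ T ∧ v = res T (-(e β))}

/-- The minimal cone `𝒞^min_T = i_T(𝒟_T ∩ ⋂_{β ∈ 𝔹(T)} 𝒟_{T,f_β}) ⊆ ℚ^{𝔹−T}`. -/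
def Cmin (σ : Equiv.Perm B) (p : ℕ) (T : Set B) : Set ({β : B // β ∉ T} → ℚ) :=
  iT σ p T '' (D σ p T ∩ {κ | ∀ β ∈ BT σ T, κ ∈ Df σ p T β})

/-- `g_β`: `b_β` if `β ∈ T_𝔭`; `−e_β` if `β ∈ T̃_𝔭 − T_𝔭` and `𝔹_𝔭 = T̃_𝔭`;
`−b_{σ^{n_β}β}^β` if `β ∈ T̃_𝔭 − T_𝔭` and `𝔹_𝔭 ≠ T̃_𝔭`; `h_{σ^{n_β}β}^β` if `β ∈ 𝔹_𝔭 − T̃_𝔭`. -/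
def gvec (σ : Equiv.Perm B) (p : ℕ) (T : Set B) (β : B) : B → ℚ :=
  if β ∈ T then bsimple σ p β
  else if orbit σ β ⊆ tilde σ T then -(e β)
  else if β ∈ tilde σ T then -(fB σ p T β)
  else fH σ p T β

/-- The map `σ̄ : β ↦ σ^{n_β} β`. -/
def sigbar (σ : Equiv.Perm B) (T : Set B) (β : B) : B := (σ ^ nn σ T β) β

/-- `h_β = -e_β + p e_{σ⁻¹β}` as an element of `ℤ^𝔹`. -/
def hZ (σ : Equiv.Perm B) (p : ℕ) (β : B) : B → ℤ :=
  fun τ => (if τ = β then -1 else 0) + (if τ = σ⁻¹ β then (p : ℤ) else 0)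

end GO

end

/-!
Passing from the generators `𝒢` of `𝒟_T` to the paper's smaller set `𝒢'` (`GO.D'gen`) does not
change the cone, so `𝒟_T = 𝒟'_T`. Indeed `h`-vectors compose along a `σ`-path,
`h_{σ^{m+n}β}^β = h_{σ^{m+n}β}^{σ^n β} + p^m h_{σ^n β}^β`, so the `h`-vectors between elements
outside `T̃` all come from those joining consecutive such elements. Following a path back to its
start gives `(p^N - 1) e_β` with `p^N > 1`, so the cone contains `e_β` for `β ∉ T̃`, and hence
`-e_β` for `β ∈ T̃ - T`. A generator with upper index `σγ`, `γ ∈ T̃ - T`, is moved to `γ` using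
`e_{σγ} = b_{σγ} - p e_γ`, because `σγ ∈ T` and `±b_{σγ}` lies in both cones.

Finally, `i_T` kills `b_β` for `β ∈ T` and restricts to the identity on vectors supported off `T`,
so it sends `𝒢'` onto `𝒢^{T-red}`, up to the vector `0`.
-/

namespace GO

open Equiv.Perm PointedCone

section Cone

variable {V W : Type*} [AddCommMonoid V] [Module ℚ V] [AddCommMonoid W] [Module ℚ W]

theorem cone_eq_coe_hull (S : Set V) : cone S = hull ℚ S := by
  ext x
  rw [SetLike.mem_coe, Submodule.mem_span_set']
  constructor
  · rintro ⟨n, c, v, hc, hv, rfl⟩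
    exact ⟨n, fun i => ⟨c i, hc i⟩, fun i => ⟨v i, hv i⟩, rfl⟩
  · rintro ⟨n, c, v, rfl⟩
    exact ⟨n, fun i => c i, fun i => v i, fun i => (c i).2, fun i => (v i).2, rfl⟩

theorem image_cone (f : V →ₗ[ℚ] W) (S : Set V) : f '' cone S = cone (f '' S) := by
  rw [cone_eq_coe_hull, cone_eq_coe_hull, ← PointedCone.coe_map]
  exact congrArg _ (Submodule.map_span (f.restrictScalars _) S)

end Cone

variable {B : Type*} {σ : Equiv.Perm B} {p : ℕ} {T : Set B} {β β' γ : B}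

section Orbit

theorem self_mem_orbit (σ : Equiv.Perm B) (β : B) : β ∈ orbit σ β := ⟨0, rfl⟩

theorem steps_eq_of_forall_ne {n : ℕ} (hn : 0 < n)
    (hmin : ∀ k, 0 < k → k < n → (σ ^ k) β ≠ (σ ^ n) β) : steps σ β ((σ ^ n) β) = n :=
  IsLeast.csInf_eq ⟨⟨hn, rfl⟩, fun _ ⟨hk, hkn⟩ => not_lt.1 fun hlt => hmin _ hk hlt hkn⟩

variable [Finite B]

theorem sameOrbit_iff_sameCycle : sameOrbit σ β β' ↔ σ.SameCycle β β' :=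
  ⟨fun ⟨n, hn⟩ => ⟨n, by simpa using hn⟩, SameCycle.exists_nat_pow_eq⟩

theorem sameOrbit_pow_apply_left (σ : Equiv.Perm B) (n : ℕ) (β : B) : sameOrbit σ ((σ ^ n) β) β :=
  sameOrbit_iff_sameCycle.2 (sameCycle_pow_left.2 (SameCycle.refl σ β))

theorem orbit_inv_apply (σ : Equiv.Perm B) (β : B) : orbit σ (σ⁻¹ β) = orbit σ β := by
  ext τ
  simp only [orbit, Set.mem_ofPred_eq, sameOrbit_iff_sameCycle, inv_def, sameCycle_symm_apply_left]

theorem steps_spec (h : sameOrbit σ β β') :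
    0 < steps σ β' β ∧ (σ ^ steps σ β' β) β' = β := by
  obtain ⟨n, hn, -, hnβ⟩ := (sameOrbit_iff_sameCycle.1 h).symm.exists_pow_eq''
  exact Nat.sInf_mem (s := {n | 0 < n ∧ (σ ^ n) β' = β}) ⟨n, hn, hnβ⟩

end Orbit

section Tilde

theorem subset_tilde (σ : Equiv.Perm B) (T : Set B) : T ⊆ tilde σ T := Set.subset_union_left

theorem notMem_of_notMem_tilde (h : β ∉ tilde σ T) : β ∉ T := fun hβ => h (subset_tilde σ T hβ)

theorem not_orbit_subset_tilde {n : ℕ} (h : (σ ^ n) β ∉ tilde σ T) : ¬ orbit σ β ⊆ tilde σ T :=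
  fun hsub => h (hsub ⟨n, rfl⟩)

theorem IsChainIn.subset {C : Set B} (hC : IsChainIn σ T C) : C ⊆ T := by
  obtain ⟨β, m, -, -, hT, rfl⟩ := hC
  rintro _ ⟨i, hi, rfl⟩
  exact hT i hi

theorem chainExt_subset (σ : Equiv.Perm B) (C : Set B) : chainExt σ C ⊆ C ∪ ⇑σ⁻¹ '' C := by
  unfold chainExt
  split_ifs
  · exact subset_rfl
  · exact Set.subset_union_left

theorem apply_mem_of_mem_tilde (h : γ ∈ tilde σ T) (hT : γ ∉ T) : σ γ ∈ T := by
  simp only [tilde, Set.mem_union, hT, false_or, Set.mem_iUnion] at h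
  obtain ⟨C, hC, hγ⟩ := h
  rcases chainExt_subset σ C hγ with hγC | ⟨τ, hτ, rfl⟩
  · exact absurd (hC.subset hγC) hT
  · simpa using hC.subset hτ

theorem nn_le {n : ℕ} (hn : 0 < n) (h : (σ ^ n) β ∉ tilde σ T) : nn σ T β ≤ n :=
  Nat.sInf_le ⟨hn, h⟩

theorem pow_apply_mem_tilde_of_lt_nn {k : ℕ} (hk : 0 < k) (h : k < nn σ T β) :
    (σ ^ k) β ∈ tilde σ T :=
  not_not.1 fun hkT => Nat.notMem_of_lt_sInf h ⟨hk, hkT⟩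

variable [Finite B]

theorem nn_spec (h : ¬ orbit σ β ⊆ tilde σ T) :
    0 < nn σ T β ∧ (σ ^ nn σ T β) β ∉ tilde σ T := by
  obtain ⟨τ, hβτ, hτ⟩ := Set.not_subset.1 h
  obtain ⟨n, hn, -, rfl⟩ := (sameOrbit_iff_sameCycle.1 hβτ).exists_pow_eq''
  exact Nat.sInf_mem (s := {i | 0 < i ∧ (σ ^ i) β ∉ tilde σ T}) ⟨n, hn, hτ⟩

theorem steps_pow_nn_apply (ho : ¬ orbit σ β ⊆ tilde σ T) :
    steps σ β ((σ ^ nn σ T β) β) = nn σ T β :=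
  have ⟨hpos, hnext⟩ := nn_spec ho
  steps_eq_of_forall_ne hpos fun _ hk hlt heq =>
    hnext (heq ▸ pow_apply_mem_tilde_of_lt_nn hk hlt)

theorem one_lt_nn (ho : ¬ orbit σ β ⊆ tilde σ T) (hβ : β ∈ tilde σ T) (hT : β ∉ T) :
    1 < nn σ T β := by
  obtain ⟨hpos, hnext⟩ := nn_spec ho
  refine lt_of_le_of_ne hpos fun h => hnext ?_
  rw [← h, pow_one]
  exact subset_tilde σ T (apply_mem_of_mem_tilde hβ hT)

theorem steps_apply_pow_nn_apply (ho : ¬ orbit σ β ⊆ tilde σ T) (hβ : β ∈ tilde σ T)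
    (hT : β ∉ T) : steps σ (σ β) ((σ ^ nn σ T β) β) + 1 = nn σ T β := by
  have hnext := (nn_spec ho).2
  obtain ⟨m, hm⟩ : ∃ m, nn σ T β = m + 1 + 1 := Nat.exists_eq_add_of_le' (one_lt_nn ho hβ hT)
  have hpow (k : ℕ) : (σ ^ k) (σ β) = (σ ^ (k + 1)) β := by rw [pow_succ, mul_apply]
  have hsteps : steps σ (σ β) ((σ ^ (m + 1)) (σ β)) = m + 1 := by
    refine steps_eq_of_forall_ne m.succ_pos fun k _ hlt heq => hnext ?_
    rw [hm, ← hpow, ← heq, hpow]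
    exact pow_apply_mem_tilde_of_lt_nn k.succ_pos (by lia)
  rw [hm, ← hpow, hsteps]

end Tilde

section Path

variable [DecidableEq B]

/-- The vector `-e_{σⁿβ} + pⁿ e_β`, that is `h_{σⁿβ}^β` without the requirement `0 < n ≤ |𝔹_𝔭|`, so
that such vectors can be composed along arbitrary `σ`-paths. -/
def hpath (σ : Equiv.Perm B) (p n : ℕ) (β : B) : B → ℚ := -(e ((σ ^ n) β)) + ((p : ℚ) ^ n) • e β

/-- The vector `e_{σⁿβ} + pⁿ e_β`, that is `b_{σⁿβ}^β` without the requirement `0 < n ≤ |𝔹_𝔭|`. -/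
def bpath (σ : Equiv.Perm B) (p n : ℕ) (β : B) : B → ℚ := e ((σ ^ n) β) + ((p : ℚ) ^ n) • e β

theorem hpath_add (σ : Equiv.Perm B) (p m n : ℕ) (β : B) :
    hpath σ p (m + n) β = hpath σ p m ((σ ^ n) β) + ((p : ℚ) ^ m) • hpath σ p n β := by
  simp only [hpath, pow_add, mul_apply]
  module

theorem neg_bpath_add (σ : Equiv.Perm B) (p m n : ℕ) (β : B) :
    -bpath σ p (m + n) β = hpath σ p m ((σ ^ n) β) + ((p : ℚ) ^ m) • -bpath σ p n β := by
  simp only [hpath, bpath, pow_add, mul_apply]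
  module

theorem hpath_apply (σ : Equiv.Perm B) (p n : ℕ) (γ : B) :
    hpath σ p n (σ γ) = ((p : ℚ) ^ n) • bsimple σ p (σ γ) + -bpath σ p (n + 1) γ := by
  simp only [hpath, bpath, bsimple, pow_succ, mul_apply, inv_def, Equiv.symm_apply_apply]
  module

theorem hvec_eq_hpath [Finite B] (h : sameOrbit σ β β') :
    hvec σ p β β' = hpath σ p (steps σ β' β) β' := by
  rw [hvec, hpath, (steps_spec h).2]

end Path

section GeneratorsInD'

variable [DecidableEq B]

theorem fH_mem_hull_D'gen (h : β ∉ tilde σ T) : fH σ p T β ∈ hull ℚ (D'gen σ p T) :=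
  subset_hull (.inl (.inl (.inl ⟨β, h, rfl⟩)))

theorem neg_fB_mem_hull_D'gen (h : β ∈ tilde σ T) (hT : β ∉ T) (ho : ¬ orbit σ β ⊆ tilde σ T) :
    -fB σ p T β ∈ hull ℚ (D'gen σ p T) :=
  subset_hull (.inl (.inl (.inr ⟨β, h, hT, ho, rfl⟩)))

variable [Finite B]

theorem hpath_mem_hull_D'gen_of_notMem_tilde (n : ℕ) (hβ : β ∉ tilde σ T)
    (hnβ : (σ ^ n) β ∉ tilde σ T) : hpath σ p n β ∈ hull ℚ (D'gen σ p T) := by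
  induction n using Nat.strong_induction_on generalizing β with
  | _ n ih =>
    rcases n.eq_zero_or_pos with rfl | hn
    · simp [hpath]
    · obtain ⟨hpos, hnext⟩ := nn_spec (not_orbit_subset_tilde (n := 0) hβ)
      obtain ⟨m, rfl⟩ := Nat.exists_eq_add_of_le' (nn_le hn hnβ)
      rw [pow_add, mul_apply] at hnβ
      rw [hpath_add]
      exact add_mem (ih m (by lia) hnext hnβ)
        (PointedCone.smul_mem _ (by positivity) (fH_mem_hull_D'gen hβ))

theorem neg_bpath_mem_hull_D'gen_of_notMem_tilde {n : ℕ} (hn : 0 < n) (hβ : β ∈ tilde σ T)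
    (hT : β ∉ T) (hnβ : (σ ^ n) β ∉ tilde σ T) :
    -bpath σ p n β ∈ hull ℚ (D'gen σ p T) := by
  have ho := not_orbit_subset_tilde hnβ
  obtain ⟨m, rfl⟩ := Nat.exists_eq_add_of_le' (nn_le hn hnβ)
  rw [pow_add, mul_apply] at hnβ
  rw [neg_bpath_add]
  exact add_mem (hpath_mem_hull_D'gen_of_notMem_tilde m (nn_spec ho).2 hnβ)
    (PointedCone.smul_mem _ (by positivity) (neg_fB_mem_hull_D'gen hβ hT ho))

theorem e_mem_hull_D'gen (hp : 1 < p) (h : β ∉ tilde σ T) : e β ∈ hull ℚ (D'gen σ p T) := by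
  have hσ : (σ ^ orderOf σ) β = β := by rw [pow_orderOf_eq_one, one_apply]
  have hloop : hpath σ p (orderOf σ) β = ((p : ℚ) ^ orderOf σ - 1) • e β := by
    rw [hpath, hσ]
    module
  have hpos : 0 < (p : ℚ) ^ orderOf σ - 1 :=
    sub_pos.2 (one_lt_pow₀ (mod_cast hp) (orderOf_pos σ).ne')
  rw [← PointedCone.smul_mem_iff _ hpos, ← hloop]
  exact hpath_mem_hull_D'gen_of_notMem_tilde _ h (by rwa [hσ])

theorem neg_e_mem_hull_D'gen (hp : 1 < p) (h : β ∈ tilde σ T) (hT : β ∉ T) :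
    -e β ∈ hull ℚ (D'gen σ p T) := by
  by_cases ho : orbit σ β ⊆ tilde σ T
  · exact subset_hull (.inl (.inr ⟨β, hT, ho, rfl⟩))
  · have hpos : 0 < (p : ℚ) ^ nn σ T β := pow_pos (mod_cast zero_lt_one.trans hp) _
    have hsplit : (p : ℚ) ^ nn σ T β • -e β = -fB σ p T β + e ((σ ^ nn σ T β) β) := by
      rw [fB]
      module
    rw [← PointedCone.smul_mem_iff _ hpos, hsplit]
    exact add_mem (neg_fB_mem_hull_D'gen h hT ho) (e_mem_hull_D'gen hp (nn_spec ho).2)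

theorem neg_bpath_mem_hull_D'gen (hp : 1 < p) {n : ℕ} (hn : 0 < n)
    (hβ : β ∈ tilde σ T) (hT : β ∉ T) (hnβ : (σ ^ n) β ∉ T) :
    -bpath σ p n β ∈ hull ℚ (D'gen σ p T) := by
  by_cases h : (σ ^ n) β ∈ tilde σ T
  · rw [bpath, neg_add, ← smul_neg]
    exact add_mem (neg_e_mem_hull_D'gen hp h hnβ)
      (PointedCone.smul_mem _ (by positivity) (neg_e_mem_hull_D'gen hp hβ hT))
  · exact neg_bpath_mem_hull_D'gen_of_notMem_tilde hn hβ hT h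

theorem hpath_mem_hull_D'gen (hp : 1 < p) (n : ℕ) (hβ : β ∉ tilde σ T)
    (hnβ : (σ ^ n) β ∉ T) : hpath σ p n β ∈ hull ℚ (D'gen σ p T) := by
  by_cases h : (σ ^ n) β ∈ tilde σ T
  · exact add_mem (neg_e_mem_hull_D'gen hp h hnβ)
      (PointedCone.smul_mem _ (by positivity) (e_mem_hull_D'gen hp hβ))
  · exact hpath_mem_hull_D'gen_of_notMem_tilde n hβ h

theorem hvec_mem_hull_D'gen (hp : 1 < p) (hβ : β ∉ T) (hβ' : β' ∈ Tscr σ T)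
    (ho : sameOrbit σ β β') : hvec σ p β β' ∈ hull ℚ (D'gen σ p T) := by
  rw [hvec_eq_hpath ho]
  have hend : (σ ^ steps σ β' β) β' ∉ T := by rwa [(steps_spec ho).2]
  generalize steps σ β' β = n at hend
  rcases hβ' with hβ' | ⟨γ, ⟨hγ, hγT⟩, rfl⟩
  · exact hpath_mem_hull_D'gen hp n hβ' hend
  · rw [← mul_apply, ← pow_succ] at hend
    rw [hpath_apply]
    exact add_mem
      (PointedCone.smul_mem _ (by positivity)
        (subset_hull (.inr ⟨σ γ, apply_mem_of_mem_tilde hγ hγT, .inl rfl⟩)))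
      (neg_bpath_mem_hull_D'gen hp n.succ_pos hγ hγT hend)

end GeneratorsInD'

section GeneratorsInD

variable [Finite B] [DecidableEq B]

theorem fH_mem_hull_Dgen (hβ : β ∉ tilde σ T) : fH σ p T β ∈ hull ℚ (Dgen σ p T) := by
  have ho := not_orbit_subset_tilde (n := 0) hβ
  refine subset_hull (.inl ⟨_, β, notMem_of_notMem_tilde (nn_spec ho).2, .inl hβ,
    sameOrbit_pow_apply_left σ _ β, ?_⟩)
  rw [hvec, steps_pow_nn_apply ho, fH]

theorem neg_bpath_mem_hull_Dgen (hγ : γ ∈ tilde σ T) (hγT : γ ∉ T) (hβ : β ∉ T)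
    (ho : sameOrbit σ β (σ γ)) :
    -bpath σ p (steps σ (σ γ) β + 1) γ ∈ hull ℚ (Dgen σ p T) := by
  have hh : hvec σ p β (σ γ) ∈ hull ℚ (Dgen σ p T) :=
    subset_hull (.inl ⟨β, σ γ, hβ, .inr ⟨γ, ⟨hγ, hγT⟩, rfl⟩, ho, rfl⟩)
  have hb : -bsimple σ p (σ γ) ∈ hull ℚ (Dgen σ p T) :=
    subset_hull (.inr ⟨σ γ, apply_mem_of_mem_tilde hγ hγT, .inr rfl⟩)
  have hsplit : -bpath σ p (steps σ (σ γ) β + 1) γ =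
      hvec σ p β (σ γ) + (p : ℚ) ^ steps σ (σ γ) β • -bsimple σ p (σ γ) := by
    rw [hvec_eq_hpath ho, hpath_apply]
    module
  rw [hsplit]
  exact add_mem hh (PointedCone.smul_mem _ (by positivity) hb)

theorem neg_fB_mem_hull_Dgen (hβ : β ∈ tilde σ T) (hT : β ∉ T) (ho : ¬ orbit σ β ⊆ tilde σ T) :
    -fB σ p T β ∈ hull ℚ (Dgen σ p T) := by
  have hso : sameOrbit σ ((σ ^ nn σ T β) β) (σ β) :=
    sameOrbit_iff_sameCycle.2
      (sameCycle_apply_right.2 (sameOrbit_iff_sameCycle.1 (sameOrbit_pow_apply_left σ _ β)))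
  have hb := neg_bpath_mem_hull_Dgen (p := p) hβ hT (notMem_of_notMem_tilde (nn_spec ho).2) hso
  rwa [steps_apply_pow_nn_apply ho hβ hT] at hb

theorem neg_e_mem_hull_Dgen (hβ : β ∈ tilde σ T) (hT : β ∉ T) :
    -e β ∈ hull ℚ (Dgen σ p T) := by
  have hso : sameOrbit σ β (σ β) := ⟨1, by rw [pow_one]⟩
  have hpos : 0 < 1 + (p : ℚ) ^ (steps σ (σ β) β + 1) := by positivity
  have hloop : -bpath σ p (steps σ (σ β) β + 1) β =
      (1 + (p : ℚ) ^ (steps σ (σ β) β + 1)) • -e β := by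
    rw [bpath, pow_succ σ, mul_apply, (steps_spec hso).2]
    module
  rw [← PointedCone.smul_mem_iff _ hpos, ← hloop]
  exact neg_bpath_mem_hull_Dgen hβ hT hT hso

end GeneratorsInD

theorem D_eq_D' [Finite B] [DecidableEq B] (σ : Equiv.Perm B) (hp : 1 < p) (T : Set B) :
    D σ p T = D' σ p T := by
  rw [D, D', cone_eq_coe_hull, cone_eq_coe_hull]
  refine congrArg _ (le_antisymm (Submodule.span_le.2 ?_) (Submodule.span_le.2 ?_))
  · rintro _ (⟨β, β', hβ, hβ', ho, rfl⟩ | hb)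
    · exact hvec_mem_hull_D'gen hp hβ hβ' ho
    · exact subset_hull (.inr hb)
  · rintro _ (((⟨β, hβ, rfl⟩ | ⟨β, hβ, hT, ho, rfl⟩) | ⟨β, hT, ho, rfl⟩) | hb)
    · exact fH_mem_hull_Dgen hβ
    · exact neg_fB_mem_hull_Dgen hβ hT ho
    · exact neg_e_mem_hull_Dgen (ho (self_mem_orbit σ β)) hT
    · exact subset_hull (.inr hb)

section ReductionMap

theorem nu_eq_zero (hβ : β ∉ T) : nu σ T β = 0 :=
  Nat.sInf_eq_zero.2 (.inl hβ)

theorem nu_inv_apply_add_one [Finite B] (hβ : β ∈ T) (ho : ¬ orbit σ β ⊆ T) :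
    nu σ T (σ⁻¹ β) + 1 = nu σ T β := by
  have hne : {i : ℕ | (σ⁻¹ ^ i) β ∉ T}.Nonempty := by
    obtain ⟨τ, hτ, hτT⟩ := Set.not_subset.1 ho
    obtain ⟨n, rfl⟩ := (sameCycle_inv.2 (sameOrbit_iff_sameCycle.1 hτ)).exists_nat_pow_eq
    exact ⟨n, hτT⟩
  have hpos : 1 ≤ nu σ T β := by
    refine Nat.one_le_iff_ne_zero.2 fun h0 => ?_
    rcases Nat.sInf_eq_zero.1 h0 with h | h
    · exact h hβ
    · exact hne.ne_empty h
  simpa only [nu, pow_succ, mul_apply] using Nat.sInf_add (p := fun i => (σ⁻¹ ^ i) β ∉ T) hpos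

theorem e_apply_eq_zero [DecidableEq B] (hβ : β ∉ T) (hγ : γ ∈ T) : e β γ = 0 :=
  if_neg (ne_of_mem_of_not_mem hγ hβ)

variable [Fintype B] [DecidableEq B]

/-- The map `i_T` as a `ℚ`-linear map. -/
noncomputable def iTLinear (σ : Equiv.Perm B) (p : ℕ) (T : Set B) :
    (B → ℚ) →ₗ[ℚ] ({β : B // β ∉ T} → ℚ) where
  toFun := iT σ p T
  map_add' x y := by
    ext
    simp only [iT, Pi.add_apply, add_mul, Finset.sum_add_distrib]
  map_smul' a x := by
    ext
    simp only [iT, Pi.smul_apply, smul_eq_mul, Finset.mul_sum, mul_assoc, RingHom.id_apply]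

theorem iT_e (σ : Equiv.Perm B) (p : ℕ) (T : Set B) (β : B) : iT σ p T (e β) =
    if orbit σ β ⊆ T then 0 else (-(p : ℚ)) ^ nu σ T β • res T (e ((σ⁻¹ ^ nu σ T β) β)) := by
  ext β₀
  rw [iT, Finset.sum_eq_single β (fun τ _ hτ => by simp [e, hτ]) (by simp)]
  split_ifs <;> simp_all [e, res, eq_comm]

theorem iT_bsimple (hβ : β ∈ T) : iT σ p T (bsimple σ p β) = 0 := by
  have hlin : iT σ p T (bsimple σ p β) = iT σ p T (e β) + (p : ℚ) • iT σ p T (e (σ⁻¹ β)) := by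
    rw [bsimple]
    exact ((iTLinear σ p T).map_add _ _).trans (congrArg _ ((iTLinear σ p T).map_smul _ _))
  rw [hlin, iT_e, iT_e, orbit_inv_apply]
  split_ifs with ho
  · simp
  · rw [← nu_inv_apply_add_one hβ ho, pow_succ σ⁻¹, mul_apply, pow_succ]
    module

theorem iT_eq_res {v : B → ℚ} (hv : ∀ β ∈ T, v β = 0) : iT σ p T v = res T v := by
  ext β₀
  have horbit (β : B) (hβ : β ∉ T) : ¬ orbit σ β ⊆ T := fun h => hβ (h (self_mem_orbit σ β))
  rw [iT, Finset.sum_eq_single β₀.1 ?_ (by simp)]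
  · simp [horbit, nu_eq_zero β₀.2, β₀.2, res]
  · intro β _ hne
    by_cases hβ : β ∈ T
    · rw [hv β hβ, zero_mul]
    · simp [horbit β hβ, nu_eq_zero hβ, hne]

theorem iT_neg_e (hβ : β ∉ T) : iT σ p T (-e β) = res T (-e β) :=
  iT_eq_res fun γ hγ => by rw [Pi.neg_apply, e_apply_eq_zero hβ hγ, neg_zero]

theorem iT_hpath {n : ℕ} (hβ : β ∉ T) (hnβ : (σ ^ n) β ∉ T) :
    iT σ p T (hpath σ p n β) = res T (hpath σ p n β) :=
  iT_eq_res fun γ hγ => by simp [hpath, e_apply_eq_zero hβ hγ, e_apply_eq_zero hnβ hγ]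

theorem iT_neg_bpath {n : ℕ} (hβ : β ∉ T) (hnβ : (σ ^ n) β ∉ T) :
    iT σ p T (-bpath σ p n β) = res T (-bpath σ p n β) :=
  iT_eq_res fun γ hγ => by simp [bpath, e_apply_eq_zero hβ hγ, e_apply_eq_zero hnβ hγ]

theorem iT_fH (hβ : β ∉ tilde σ T) : iT σ p T (fH σ p T β) = res T (fH σ p T β) :=
  iT_hpath (notMem_of_notMem_tilde hβ)
    (notMem_of_notMem_tilde (nn_spec (not_orbit_subset_tilde (n := 0) hβ)).2)

theorem iT_neg_fB (hβ : β ∉ T) (ho : ¬ orbit σ β ⊆ tilde σ T) :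
    iT σ p T (-fB σ p T β) = res T (-fB σ p T β) :=
  iT_neg_bpath hβ (notMem_of_notMem_tilde (nn_spec ho).2)

theorem image_iT_D'gen_subset (σ : Equiv.Perm B) (p : ℕ) (T : Set B) :
    iT σ p T '' D'gen σ p T ⊆ insert 0 (Gred σ p T) := by
  rintro _ ⟨_, ((⟨β, hβ, rfl⟩ | ⟨β, hβ, hT, ho, rfl⟩) | ⟨β, hT, ho, rfl⟩) | ⟨β, hβ, rfl | rfl⟩, rfl⟩
  · exact .inr (.inl (.inl ⟨β, hβ, iT_fH hβ⟩))
  · exact .inr (.inl (.inr ⟨β, hβ, hT, ho, iT_neg_fB hT ho⟩))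
  · exact .inr (.inr ⟨β, hT, ho, iT_neg_e hT⟩)
  · exact .inl (iT_bsimple hβ)
  · exact .inl (((iTLinear σ p T).map_neg _).trans (neg_eq_zero.2 (iT_bsimple hβ)))

theorem Gred_subset_image_iT_D'gen (σ : Equiv.Perm B) (p : ℕ) (T : Set B) :
    Gred σ p T ⊆ iT σ p T '' D'gen σ p T := by
  rintro _ ((⟨β, hβ, rfl⟩ | ⟨β, hβ, hT, ho, rfl⟩) | ⟨β, hT, ho, rfl⟩)
  · exact ⟨_, .inl (.inl (.inl ⟨β, hβ, rfl⟩)), iT_fH hβ⟩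
  · exact ⟨_, .inl (.inl (.inr ⟨β, hβ, hT, ho, rfl⟩)), iT_neg_fB hT ho⟩
  · exact ⟨_, .inl (.inr ⟨β, hT, ho, rfl⟩), iT_neg_e hT⟩

theorem image_iT_D' (σ : Equiv.Perm B) (p : ℕ) (T : Set B) :
    iT σ p T '' D' σ p T = cone (Gred σ p T) := by
  refine (image_cone (iTLinear σ p T) (D'gen σ p T)).trans ?_
  rw [cone_eq_coe_hull, cone_eq_coe_hull]
  refine congrArg _ (le_antisymm ?_ (Submodule.span_mono (Gred_subset_image_iT_D'gen σ p T)))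
  exact (Submodule.span_mono (image_iT_D'gen_subset σ p T)).trans_eq Submodule.span_insert_zero

end ReductionMap

end GO

theorem statement7_general {B : Type*} [Fintype B] [DecidableEq B]
    (σ : Equiv.Perm B) (p : ℕ) (hp : 1 < p) (T : Set B) :
    GO.iT σ p T '' GO.D σ p T = GO.cone (GO.Gred σ p T) := by
  rw [GO.D_eq_D' σ hp T, GO.image_iT_D' σ p T]

/-- `i_T(𝒟_T) ⊆ ℚ^{𝔹−T}` equals the `ℚ^{≥0}`-cone generated by
`⋃_𝔭 𝒢^{T-red}(T_𝔭)`. -/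
theorem statement7 {B : Type*} [Fintype B] [DecidableEq B] [Nonempty B]
    (σ : Equiv.Perm B) (p : ℕ) (hp : p.Prime) (T : Set B) :
    GO.iT σ p T '' GO.D σ p T = GO.cone (GO.Gred σ p T) :=
  statement7_general σ p hp.one_lt T
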